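/- Let E ⊆ ℝ⁺ and q > 1. Then E is strongly porous at 0 if and only if the q-blow up E(q) is strongly porous at 0. -/

import Mathlib

/-!
Strong porosity at `0` is a statement about ratios of endpoints: `E` is strongly porous at `0` iff,
arbitrarily close to `0`, there are gaps `(a, b)` of `E` with `a / b` arbitrarily small
(`upperPorosity_eq_one_iff`). A gap `(a, b)` of `E` contains the gap `(q a, b / q)` of the blow-up,
which multiplies the endpoint ratio only by the constant `q ^ 2`; conversely every gap of the blow-up
is a gap of `E`, since a positive point belongs to its own blow-up interval.
-/


open Filter Set

/-- `gapLength E h` = λ(E,h): the length of the largest open subinterval of (0,h)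
containing no point of `E` (0 if no such interval exists). -/
noncomputable def gapLength (E : Set ℝ) (h : ℝ) : ℝ :=
  sSup {l : ℝ | ∃ a b : ℝ, 0 ≤ a ∧ a ≤ b ∧ b ≤ h ∧ Set.Ioo a b ∩ E = ∅ ∧ l = b - a}

/-- The right upper porosity of `E` at 0. -/
noncomputable def upperPorosity (E : Set ℝ) : ℝ :=
  Filter.limsup (fun h => gapLength E h / h) (nhdsWithin (0:ℝ) (Set.Ioi 0))

/-- The right lower porosity of `E` at 0. -/
noncomputable def lowerPorosity (E : Set ℝ) : ℝ :=
  Filter.liminf (fun h => gapLength E h / h) (nhdsWithin (0:ℝ) (Set.Ioi 0))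

/-- `UMP E`: sequences of positive reals tending to 0 along which the upper limit
in the definition of porosity is attained. -/
def UMP (E : Set ℝ) : Set (ℕ → ℝ) :=
  {h | (∀ n, 0 < h n) ∧ Filter.Tendsto h Filter.atTop (nhds 0) ∧
    Filter.Tendsto (fun n => gapLength E (h n) / h n) Filter.atTop (nhds (upperPorosity E))}

/-- The set of all strongly porous at 0 subsets of ℝ⁺. -/
def SP : Set (Set ℝ) := {E | E ⊆ Set.Ici 0 ∧ upperPorosity E = 1}

/-- `I` is an ideal on the set `X`. -/
def IsIdealOn (X : Set ℝ) (I : Set (Set ℝ)) : Prop :=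
  I.Nonempty ∧ (∀ B ∈ I, B ⊆ X) ∧ (∀ B ∈ I, ∀ C : Set ℝ, C ⊆ B → C ∈ I) ∧
    (∀ B ∈ I, ∀ C ∈ I, B ∪ C ∈ I) ∧ X ∉ I

/-- `I` is a `Γ`-maximal ideal on `X`. -/
def IsMaximalIdealIn (X : Set ℝ) (Γ I : Set (Set ℝ)) : Prop :=
  IsIdealOn X I ∧ I ⊆ Γ ∧ ∀ J : Set (Set ℝ), IsIdealOn X J → I ⊆ J → J ⊆ Γ → I = J

/-- `Î(SP)`: the intersection of all SP-maximal ideals on ℝ⁺. -/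
def hatISP : Set (Set ℝ) :=
  {A | ∀ I : Set (Set ℝ), IsMaximalIdealIn (Set.Ici 0) SP I → A ∈ I}

/-- The q-blow up `E(q)` of a set `E ⊆ ℝ⁺`. -/
def blowUp (E : Set ℝ) (q : ℝ) : Set ℝ := ⋃ x ∈ E, Set.Ioo (q⁻¹ * x) (q * x)

lemma gapLength_bddAbove (E : Set ℝ) (h : ℝ) :
    BddAbove {l : ℝ | ∃ a b : ℝ, 0 ≤ a ∧ a ≤ b ∧ b ≤ h ∧ Set.Ioo a b ∩ E = ∅ ∧ l = b - a} := by
  refine ⟨h, ?_⟩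
  rintro l ⟨a, b, ha, -, hb, -, rfl⟩
  linarith

lemma gapLength_set_nonempty (E : Set ℝ) {h : ℝ} (hh : 0 ≤ h) :
    {l : ℝ | ∃ a b : ℝ, 0 ≤ a ∧ a ≤ b ∧ b ≤ h ∧ Set.Ioo a b ∩ E = ∅ ∧ l = b - a}.Nonempty :=
  ⟨0, 0, 0, le_rfl, le_rfl, hh, by simp, by simp⟩

lemma gapLength_nonneg (E : Set ℝ) (h : ℝ) : 0 ≤ gapLength E h := by
  apply Real.sSup_nonneg
  rintro l ⟨a, b, -, hab, -, -, rfl⟩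
  linarith

lemma gapLength_le (E : Set ℝ) {h : ℝ} (hh : 0 ≤ h) : gapLength E h ≤ h := by
  apply csSup_le (gapLength_set_nonempty E hh)
  rintro l ⟨a, b, ha, -, hb, -, rfl⟩
  linarith

/-- Strong porosity at `0` in terms of endpoint ratios: arbitrarily close to `0` there are gaps
whose left endpoint is negligible compared with the right one. -/
lemma upperPorosity_eq_one_iff (E : Set ℝ) :
    upperPorosity E = 1 ↔ ∀ ε > 0, ∀ δ > 0, ∃ a b : ℝ,
      0 ≤ a ∧ 0 < b ∧ b < δ ∧ a < ε * b ∧ Set.Ioo a b ∩ E = ∅ := by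
  have hle : ∀ᶠ h in nhdsWithin (0:ℝ) (Set.Ioi 0), gapLength E h / h ≤ 1 := by
    filter_upwards [self_mem_nhdsWithin] with h hh
    exact div_le_one_of_le₀ (gapLength_le E (le_of_lt hh)) (le_of_lt hh)
  have hge : ∀ᶠ h in nhdsWithin (0:ℝ) (Set.Ioi 0), 0 ≤ gapLength E h / h := by
    filter_upwards [self_mem_nhdsWithin] with h hh
    exact div_nonneg (gapLength_nonneg E h) (le_of_lt hh)
  have hbdd : IsBoundedUnder (· ≤ ·) (nhdsWithin (0:ℝ) (Set.Ioi 0))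
      (fun h => gapLength E h / h) := ⟨1, hle⟩
  have hcobdd : IsCoboundedUnder (· ≤ ·) (nhdsWithin (0:ℝ) (Set.Ioi 0))
      (fun h => gapLength E h / h) :=
    IsBoundedUnder.isCoboundedUnder_le ⟨0, hge⟩
  constructor
  · intro h1 ε hε δ hδ
    have hlt : 1 - ε < limsup (fun h => gapLength E h / h) (nhdsWithin (0:ℝ) (Set.Ioi 0)) := by
      change 1 - ε < upperPorosity E
      linarith
    have hfreq := (frequently_lt_of_lt_limsup hcobdd hlt).and_eventually
      (Ioo_mem_nhdsGT hδ)
    obtain ⟨h, hh, h0, hhδ⟩ := hfreq.exists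
    rw [lt_div_iff₀ h0] at hh
    obtain ⟨l, ⟨a, b, ha, hab, hbh, hE, rfl⟩, hl⟩ :=
      exists_lt_of_lt_csSup (gapLength_set_nonempty E h0.le) hh
    -- For `ε > 1` the lower bound `(1 - ε) * h` on the gap length is negative and carries no
    -- information; the empty interval `(h, h)` serves instead.
    rcases le_or_gt ε 1 with hε1 | hε1
    · have hbpos : 0 ≤ (1 - ε) * (h - b) :=
        mul_nonneg (by linarith) (by linarith)
      have hb : 0 < b := by
        rcases lt_or_eq_of_le (ha.trans hab) with hb | hb
        · exact hb
        · nlinarith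
      exact ⟨a, b, ha, hb, by linarith, by nlinarith, hE⟩
    · exact ⟨h, h, h0.le, h0, hhδ, by nlinarith, by simp⟩
  · intro H
    apply le_antisymm
    · exact limsup_le_of_le hcobdd hle
    · refine le_of_forall_lt fun c hc => ?_
      obtain ⟨d, hcd, hd⟩ := exists_between hc
      refine hcd.trans_le (le_limsup_of_frequently_le ?_ hbdd)
      rw [(nhdsGT_basis (0:ℝ)).frequently_iff]
      intro δ hδ
      -- Capping the ratio at `1` gives `a < b` even when `d` is negative.
      obtain ⟨a, b, ha, hb, hbδ, hab, hE⟩ := H (min (1 - d) 1) (by simp [hd]) δ hδ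
      refine ⟨b, ⟨hb, hbδ⟩, ?_⟩
      have h1 : min (1 - d) 1 * b ≤ (1 - d) * b :=
        mul_le_mul_of_nonneg_right (min_le_left _ _) hb.le
      have h2 : min (1 - d) 1 * b ≤ 1 * b :=
        mul_le_mul_of_nonneg_right (min_le_right _ _) hb.le
      have h3 : b - a ≤ gapLength E b :=
        le_csSup (gapLength_bddAbove E b) ⟨a, b, ha, by linarith, le_rfl, hE, rfl⟩
      rw [le_div_iff₀ hb]
      linarith

theorem stmt13 (E : Set ℝ) (hE : E ⊆ Set.Ici 0) (q : ℝ) (hq : 1 < q) :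
    upperPorosity E = 1 ↔ upperPorosity (blowUp E q) = 1 := by
  have hq0 : 0 < q := by linarith
  rw [upperPorosity_eq_one_iff, upperPorosity_eq_one_iff]
  constructor
  · intro H ε hε δ hδ
    obtain ⟨a, b, ha, hb, hbδ, hab, hgap⟩ := H (ε / q ^ 2) (by positivity) δ hδ
    refine ⟨q * a, b / q, by positivity, by positivity, (div_le_self hb.le hq.le).trans_lt hbδ,
      ?_, ?_⟩
    · calc q * a < q * (ε / q ^ 2 * b) := by gcongr
        _ = ε * (b / q) := by field_simp
    · rw [Set.eq_empty_iff_forall_notMem]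
      rintro y ⟨⟨hy1, hy2⟩, hy⟩
      simp only [blowUp, Set.mem_iUnion, Set.mem_Ioo] at hy
      obtain ⟨x, hx, hxy, hyx⟩ := hy
      rw [inv_mul_lt_iff₀ hq0] at hxy
      rw [lt_div_iff₀ hq0] at hy2
      have hax : a < x := lt_of_mul_lt_mul_left (hy1.trans hyx) hq0.le
      exact Set.eq_empty_iff_forall_notMem.mp hgap x ⟨⟨hax, by linarith⟩, hx⟩
  · intro H ε hε δ hδ
    obtain ⟨a, b, ha, hb, hbδ, hab, hgap⟩ := H ε hε δ hδ
    refine ⟨a, b, ha, hb, hbδ, hab, ?_⟩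
    rw [Set.eq_empty_iff_forall_notMem]
    rintro x ⟨hx, hxE⟩
    refine Set.eq_empty_iff_forall_notMem.mp hgap x ⟨hx, ?_⟩
    have hx0 : 0 < x := ha.trans_lt hx.1
    simp only [blowUp, Set.mem_iUnion, Set.mem_Ioo]
    refine ⟨x, hxE, ?_, by nlinarith⟩
    rw [inv_mul_lt_iff₀ hq0]
    nlinarith
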